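/- Let n ≥ 1 and a ∈ (−1,1). There exists a constant C = C(n,a) > 0 with the following property. Define, for X₀ = (x₀,y₀) ∈ ℝⁿ × (0,∞), X = (x,y) ∈ ℝⁿ × [0,∞), and t > 0, the kernel 𝒢(X,X₀,t) = p(x,x₀,t) · p^{(a)}(y,y₀,t), where p(x,x₀,t) = (4πt)^{−n/2} e^{−|x−x₀|²/(4t)} and p^{(a)}(y,y₀,t) = (2t)^{−(1+a)/2} e^{−(y²+y₀²)/(4t)} Σ_{k=0}^∞ [2^{(1−a)/2} (y y₀/(4t))^{2k}] / [k! Γ(k + (a+1)/2)]. Then for every t > 0, every X₀ ∈ ℝⁿ × (0,∞), and every smooth compactly supported function w on ℝⁿ × [0,∞): ∫_{ℝⁿ} w(x,0)² 𝒢((x,0),X₀,t) dx ≤ C ( t^{−(1+a)/2} ∫_{ℝⁿ × (0,∞)} w(X)² 𝒢(X,X₀,t) y^a dX + t^{(1−a)/2} ∫_{ℝⁿ × (0,∞)} |∇w(X)|² 𝒢(X,X₀,t) y^a dX ). -/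

import Mathlib

/-!
The inequality localizes to the strip `0 < y ≤ √t`. The series in the Bessel heat kernel has
nonnegative terms, so it is at least its value at `y = 0`, and therefore
`p^{(a)}(0,y₀,t) ≤ e^{y²/(4t)} p^{(a)}(y,y₀,t) ≤ e^{1/4} p^{(a)}(y,y₀,t)` for `y² ≤ t`,
uniformly in `y₀` (`besselHeatKernel_zero_le`). On the strip the kernel may thus be replaced by its
boundary value, and what remains is, for each fixed `x`, the unweighted trace inequality on `(0,R)`,
`R = √t`, for `u = w(x,·)` (`trace_one_dim`):
`u(0)² ≤ 2(1+a) R^{-(1+a)} ∫₀^R u² y^a dy + 2/(1-a) R^{1-a} ∫₀^R u'² y^a dy`.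
It follows from `u(0) = u(y) - ∫₀^y u'` and Cauchy–Schwarz with the weights `s^a` and `s^{-a}`,
which are both integrable at `0` because `|a| < 1`. Multiplying by the Gaussian in `x` and
integrating (Fubini) gives the claim; the integrability of the right-hand integrands
(`integrable_mul_rpow`) is essential here, since the Bochner integral of a nonintegrable function
is `0`.
-/

open MeasureTheory

/-- The Gauss–Weierstrass kernel `p(x,x₀,t) = (4πt)^{-n/2} e^{-|x-x₀|²/(4t)}`. -/
noncomputable def gaussKernel' {n : ℕ} (x x₀ : EuclideanSpace ℝ (Fin n)) (t : ℝ) : ℝ :=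
  (4 * Real.pi * t) ^ (-(n : ℝ) / 2) * Real.exp (-‖x - x₀‖ ^ 2 / (4 * t))

/-- The Bessel heat kernel with Neumann condition. -/
noncomputable def besselHeatKernel (a y y₀ t : ℝ) : ℝ :=
  (2 * t) ^ (-(1 + a) / 2) * Real.exp (-(y ^ 2 + y₀ ^ 2) / (4 * t)) *
    ∑' k : ℕ, (2 : ℝ) ^ ((1 - a) / 2) * (y * y₀ / (4 * t)) ^ (2 * k) /
      (k.factorial * Real.Gamma ((k : ℝ) + (a + 1) / 2))

/-- The kernel `𝒢(X,X₀,t) = p(x,x₀,t) p^{(a)}(y,y₀,t)`. -/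
noncomputable def degKernel' {n : ℕ} (a : ℝ) (x x₀ : EuclideanSpace ℝ (Fin n))
    (y y₀ t : ℝ) : ℝ :=
  gaussKernel' x x₀ t * besselHeatKernel a y y₀ t

/-! ### The Bessel heat kernel -/

/-- The even power series factor of the Bessel heat kernel, as a function of `z = y y₀ / (4t)`. -/
noncomputable def besselSeries (a z : ℝ) : ℝ :=
  ∑' k : ℕ, (2 : ℝ) ^ ((1 - a) / 2) * z ^ (2 * k) /
      (k.factorial * Real.Gamma ((k : ℝ) + (a + 1) / 2))

/-- The values `Γ(k + b)`, `0 < b < 1`, are bounded below uniformly in `k`: after the first step,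
the recursion `Γ(s + 1) = s Γ(s)` only multiplies by factors `≥ 1`. -/
lemma gamma_lower {b : ℝ} (hb0 : 0 < b) (hb1 : b < 1) (k : ℕ) :
    b * Real.Gamma b ≤ Real.Gamma (k + b) := by
  have hG : 0 < Real.Gamma b := Real.Gamma_pos_of_pos hb0
  induction k with
  | zero => simp only [Nat.cast_zero, zero_add]; nlinarith
  | succ k ih =>
    have e : ((k + 1 : ℕ) : ℝ) + b = (k + b) + 1 := by push_cast; ring
    rw [e, Real.Gamma_add_one (by positivity)]
    rcases Nat.eq_zero_or_pos k with rfl | hk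
    · simp
    · have h1 : (1 : ℝ) ≤ k := by exact_mod_cast hk
      have h2 : 0 < b * Real.Gamma b := by positivity
      nlinarith

lemma besselTerm_bound {a : ℝ} (ha : a ∈ Set.Ioo (-1 : ℝ) 1) {M z : ℝ} (hz : |z| ≤ M) (k : ℕ) :
    ‖(2 : ℝ) ^ ((1 - a) / 2) * z ^ (2 * k) /
      (k.factorial * Real.Gamma ((k : ℝ) + (a + 1) / 2))‖ ≤
    (2 : ℝ) ^ ((1 - a) / 2) / ((a + 1) / 2 * Real.Gamma ((a + 1) / 2)) *
      ((M ^ 2) ^ k / k.factorial) := by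
  obtain ⟨h1, h2⟩ := ha
  have hb0 : 0 < (a + 1) / 2 := by linarith
  have hG : 0 < Real.Gamma ((a + 1) / 2) := Real.Gamma_pos_of_pos hb0
  have hl := gamma_lower hb0 (by linarith) k
  have hGk : 0 < Real.Gamma ((k : ℝ) + (a + 1) / 2) := Real.Gamma_pos_of_pos (by positivity)
  have hc : (0 : ℝ) < (2 : ℝ) ^ ((1 - a) / 2) := by positivity
  have hf : (0 : ℝ) < k.factorial := by positivity
  have hzz : z ^ 2 ≤ M ^ 2 := by
    rw [← sq_abs]; exact pow_le_pow_left₀ (abs_nonneg _) hz 2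
  have hp : z ^ (2 * k) ≤ (M ^ 2) ^ k := by
    rw [pow_mul]; exact pow_le_pow_left₀ (sq_nonneg _) hzz k
  have hp0 : 0 ≤ z ^ (2 * k) := by rw [pow_mul]; positivity
  rw [Real.norm_of_nonneg (by positivity), div_mul_div_comm, mul_comm (k.factorial : ℝ)]
  gcongr

lemma besselBound_summable (c M : ℝ) :
    Summable fun k : ℕ => c * ((M ^ 2) ^ k / k.factorial) :=
  (Real.summable_pow_div_factorial _).mul_left _

lemma besselTerm_summable {a : ℝ} (ha : a ∈ Set.Ioo (-1 : ℝ) 1) (z : ℝ) :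
    Summable fun k : ℕ => (2 : ℝ) ^ ((1 - a) / 2) * z ^ (2 * k) /
      (k.factorial * Real.Gamma ((k : ℝ) + (a + 1) / 2)) :=
  Summable.of_norm_bounded (besselBound_summable _ |z|) (besselTerm_bound ha le_rfl)

lemma besselTerm_nonneg {a : ℝ} (ha : a ∈ Set.Ioo (-1 : ℝ) 1) (z : ℝ) (k : ℕ) :
    0 ≤ (2 : ℝ) ^ ((1 - a) / 2) * z ^ (2 * k) /
      (k.factorial * Real.Gamma ((k : ℝ) + (a + 1) / 2)) := by
  have hb0 : 0 < (a + 1) / 2 := by linarith [ha.1]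
  have hGk : 0 < Real.Gamma ((k : ℝ) + (a + 1) / 2) := Real.Gamma_pos_of_pos (by positivity)
  have hp0 : 0 ≤ z ^ (2 * k) := by rw [pow_mul]; positivity
  positivity

lemma besselSeries_nonneg {a : ℝ} (ha : a ∈ Set.Ioo (-1 : ℝ) 1) (z : ℝ) :
    0 ≤ besselSeries a z := tsum_nonneg (besselTerm_nonneg ha z)

/-- All terms of the series are nonnegative, so it is at least its `k = 0` term. -/
lemma besselSeries_zero_le {a : ℝ} (ha : a ∈ Set.Ioo (-1 : ℝ) 1) (z : ℝ) :
    besselSeries a 0 ≤ besselSeries a z := by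
  refine Summable.tsum_le_tsum (fun k => ?_) (besselTerm_summable ha 0) (besselTerm_summable ha z)
  rcases Nat.eq_zero_or_pos k with rfl | hk
  · simp
  · rw [zero_pow (by omega), mul_zero, zero_div]
    exact besselTerm_nonneg ha z k

lemma besselSeries_continuous {a : ℝ} (ha : a ∈ Set.Ioo (-1 : ℝ) 1) :
    Continuous (besselSeries a) := by
  rw [continuous_iff_continuousAt]
  intro z
  have h : ContinuousOn (besselSeries a) (Metric.ball 0 (|z| + 1)) := by
    refine continuousOn_tsum (fun k => ?_) (besselBound_summable _ (|z| + 1))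
      (fun k y hy => besselTerm_bound ha ?_ k)
    · fun_prop
    · simpa using (Metric.mem_ball.1 hy).le
  exact h.continuousAt (Metric.isOpen_ball.mem_nhds (by simp))

lemma besselHeatKernel_eq (a y y₀ t : ℝ) : besselHeatKernel a y y₀ t =
    (2 * t) ^ (-(1 + a) / 2) * Real.exp (-(y ^ 2 + y₀ ^ 2) / (4 * t)) *
      besselSeries a (y * y₀ / (4 * t)) := rfl

lemma besselHeatKernel_nonneg {a : ℝ} (ha : a ∈ Set.Ioo (-1 : ℝ) 1) (y y₀ : ℝ) {t : ℝ}
    (ht : 0 < t) : 0 ≤ besselHeatKernel a y y₀ t := by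
  rw [besselHeatKernel_eq]
  have := besselSeries_nonneg ha (y * y₀ / (4 * t))
  positivity

lemma besselHeatKernel_continuous {a : ℝ} (ha : a ∈ Set.Ioo (-1 : ℝ) 1) (y₀ t : ℝ) :
    Continuous fun y => besselHeatKernel a y y₀ t := by
  simp only [besselHeatKernel_eq]
  have := besselSeries_continuous ha
  fun_prop

/-- Up to the parabolic distance `√t`, the Bessel heat kernel is at least a fixed fraction of its
value on the boundary, uniformly in `y₀`. -/
lemma besselHeatKernel_zero_le {a : ℝ} (ha : a ∈ Set.Ioo (-1 : ℝ) 1) {y t : ℝ} (y₀ : ℝ)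
    (ht : 0 < t) (hy : y ^ 2 ≤ t) :
    besselHeatKernel a 0 y₀ t ≤ Real.exp (1 / 4) * besselHeatKernel a y y₀ t := by
  have h1 : besselSeries a (0 * y₀ / (4 * t)) ≤ besselSeries a (y * y₀ / (4 * t)) := by
    rw [zero_mul, zero_div]; exact besselSeries_zero_le ha _
  have h0 := besselSeries_nonneg ha (0 * y₀ / (4 * t))
  have h2 : Real.exp (-((0:ℝ) ^ 2 + y₀ ^ 2) / (4 * t)) ≤
      Real.exp (1 / 4) * Real.exp (-(y ^ 2 + y₀ ^ 2) / (4 * t)) := by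
    rw [← Real.exp_add]
    apply Real.exp_le_exp.2
    have : (1 : ℝ) / 4 + -(y ^ 2 + y₀ ^ 2) / (4 * t) - -((0:ℝ) ^ 2 + y₀ ^ 2) / (4 * t)
      = (t - y ^ 2) / (4 * t) := by field_simp; ring
    have h3 : 0 ≤ (t - y ^ 2) / (4 * t) := div_nonneg (by linarith) (by linarith)
    linarith
  rw [besselHeatKernel_eq, besselHeatKernel_eq]
  calc _ ≤ (2 * t) ^ (-(1 + a) / 2) *
        (Real.exp (1 / 4) * Real.exp (-(y ^ 2 + y₀ ^ 2) / (4 * t))) *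
          besselSeries a (y * y₀ / (4 * t)) := by gcongr
    _ = _ := by ring

/-! ### The one-dimensional trace inequality -/

/-- Cauchy–Schwarz on `(0, r)` with the weights `s^a` and `s^{-a}`. -/
lemma sq_integral_le {a : ℝ} (ha : a ∈ Set.Ioo (-1 : ℝ) 1) {r : ℝ} (hr : 0 < r) {v : ℝ → ℝ}
    (hv : Continuous v) :
    (∫ s in (0 : ℝ)..r, v s) ^ 2 ≤
      r ^ (1 - a) / (1 - a) * ∫ s in (0 : ℝ)..r, v s ^ 2 * s ^ a := by
  obtain ⟨h1, h2⟩ := ha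
  set M := ∫ s in (0 : ℝ)..r, v s with hM
  set D := ∫ s in (0 : ℝ)..r, v s ^ 2 * s ^ a with hD
  have hB : ∫ s in (0 : ℝ)..r, s ^ (-a) = r ^ (1 - a) / (1 - a) := by
    rw [integral_rpow (Or.inl (by linarith)), Real.zero_rpow (by linarith), sub_zero,
      show -a + 1 = 1 - a by ring]
  set B := r ^ (1 - a) / (1 - a) with hBdef
  have hBpos : 0 < B := div_pos (by positivity) (by linarith)
  have i1 : IntervalIntegrable (fun s => v s ^ 2 * s ^ a) volume 0 r :=
    (intervalIntegral.intervalIntegrable_rpow' h1).continuousOn_mul (by fun_prop)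
  have i2 : IntervalIntegrable (fun s : ℝ => s ^ (-a)) volume 0 r :=
    intervalIntegral.intervalIntegrable_rpow' (by linarith)
  have i3 : IntervalIntegrable v volume 0 r := hv.intervalIntegrable _ _
  -- `(v s^a - l)² s^{-a} ≥ 0`, integrated, at the optimal value `l = M / B`.
  have key : ∀ l : ℝ, 0 ≤ D - 2 * l * M + l ^ 2 * B := by
    intro l
    have e : ∫ s in (0 : ℝ)..r, (v s ^ 2 * s ^ a - 2 * l * v s + l ^ 2 * s ^ (-a)) =
        D - 2 * l * M + l ^ 2 * B := by
      rw [intervalIntegral.integral_add (i1.sub (i3.const_mul _)) (i2.const_mul _),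
        intervalIntegral.integral_sub i1 (i3.const_mul _),
        intervalIntegral.integral_const_mul, intervalIntegral.integral_const_mul, hB]
    rw [← e, intervalIntegral.integral_of_le hr.le]
    refine setIntegral_nonneg measurableSet_Ioc (fun s hs => ?_)
    have hs0 : 0 < s := hs.1
    have hsa : 0 < s ^ a := by positivity
    have : v s ^ 2 * s ^ a - 2 * l * v s + l ^ 2 * s ^ (-a) =
        (v s * s ^ a - l) ^ 2 / s ^ a := by
      rw [Real.rpow_neg hs0.le]; field_simp; ring
    rw [this]; positivity
  have k := key (M / B)
  have e : D - 2 * (M / B) * M + (M / B) ^ 2 * B = (B * D - M ^ 2) / B := by field_simp; ring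
  rw [e] at k
  have := (div_nonneg_iff.1 k).resolve_right (by intro h; linarith [h.2])
  linarith [this.1]

/-- The one-dimensional weighted trace inequality on `(0, R)`: average
`u(0)² ≤ 2 u(y)² + 2 (∫₀^y u')²` over `(0, R)` against `y^a`. -/
lemma trace_one_dim {a : ℝ} (ha : a ∈ Set.Ioo (-1 : ℝ) 1) {R : ℝ} (hR : 0 < R) {u v : ℝ → ℝ}
    (hv : Continuous v) (huv : ∀ y, HasDerivAt u (v y) y) :
    u 0 ^ 2 ≤ 2 * (1 + a) * R ^ (-(1 + a)) * (∫ y in Set.Ioc (0 : ℝ) R, u y ^ 2 * y ^ a)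
      + 2 / (1 - a) * R ^ (1 - a) * ∫ y in Set.Ioc (0 : ℝ) R, v y ^ 2 * y ^ a := by
  have hu : Continuous u := continuous_iff_continuousAt.2 fun y => (huv y).continuousAt
  have hCS : ∀ r ∈ Set.Icc (0:ℝ) R, 0 < r → (∫ s in (0 : ℝ)..r, v s) ^ 2 ≤
      R ^ (1 - a) / (1 - a) * ∫ s in (0 : ℝ)..R, v s ^ 2 * s ^ a := by
    intro r hr hr0
    have h1a : 0 < 1 - a := by linarith [ha.2]
    refine (sq_integral_le ha hr0 hv).trans ?_
    have i1 : IntervalIntegrable (fun s => v s ^ 2 * s ^ a) volume 0 R :=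
      (intervalIntegral.intervalIntegrable_rpow' ha.1).continuousOn_mul (by fun_prop)
    have hnn : ∀ s ∈ Set.Ioc (0:ℝ) R, 0 ≤ v s ^ 2 * s ^ a := fun s hs =>
      mul_nonneg (sq_nonneg _) (Real.rpow_nonneg hs.1.le _)
    have hm : ∫ s in (0 : ℝ)..r, v s ^ 2 * s ^ a ≤ ∫ s in (0 : ℝ)..R, v s ^ 2 * s ^ a := by
      rw [intervalIntegral.integral_of_le hr0.le, intervalIntegral.integral_of_le hR.le]
      refine setIntegral_mono_set
        ((intervalIntegrable_iff_integrableOn_Ioc_of_le hR.le).1 i1) ?_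
        (Set.Ioc_subset_Ioc_right hr.2).eventuallyLE
      exact (ae_restrict_iff' measurableSet_Ioc).2 (Filter.Eventually.of_forall hnn)
    have h0 : 0 ≤ ∫ s in (0 : ℝ)..r, v s ^ 2 * s ^ a := by
      rw [intervalIntegral.integral_of_le hr0.le]
      exact setIntegral_nonneg measurableSet_Ioc fun s hs => hnn s ⟨hs.1, hs.2.trans hr.2⟩
    have := hr.2
    gcongr
  obtain ⟨h1, h2⟩ := ha
  simp only [← intervalIntegral.integral_of_le hR.le]
  set A := ∫ y in (0 : ℝ)..R, u y ^ 2 * y ^ a with hA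
  set D := ∫ y in (0 : ℝ)..R, v y ^ 2 * y ^ a with hD
  have iw : IntervalIntegrable (fun s : ℝ => s ^ a) volume 0 R :=
    intervalIntegral.intervalIntegrable_rpow' h1
  have iA : IntervalIntegrable (fun s => u s ^ 2 * s ^ a) volume 0 R :=
    iw.continuousOn_mul (by fun_prop)
  have hW : ∫ s in (0 : ℝ)..R, s ^ a = R ^ (1 + a) / (1 + a) := by
    rw [integral_rpow (Or.inl h1), Real.zero_rpow (by linarith), sub_zero, add_comm a 1]
  set E := R ^ (1 - a) / (1 - a) * D with hE
  have hmono : ∫ y in (0 : ℝ)..R, u 0 ^ 2 * y ^ a ≤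
      ∫ y in (0 : ℝ)..R, (2 * (u y ^ 2 * y ^ a) + 2 * E * y ^ a) := by
    refine intervalIntegral.integral_mono_on_of_le_Ioo hR.le (iw.const_mul _)
      ((iA.const_mul _).add (iw.const_mul _)) (fun y hy => ?_)
    have hftc : ∫ s in (0 : ℝ)..y, v s = u y - u 0 :=
      intervalIntegral.integral_eq_sub_of_hasDerivAt (fun s _ => huv s) (hv.intervalIntegrable _ _)
    have hb := hCS y ⟨hy.1.le, hy.2.le⟩ hy.1
    rw [hftc] at hb
    have hya : 0 ≤ y ^ a := Real.rpow_nonneg hy.1.le _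
    have : u 0 ^ 2 ≤ 2 * u y ^ 2 + 2 * E := by nlinarith [sq_nonneg (2 * u y - u 0)]
    nlinarith [mul_le_mul_of_nonneg_right this hya]
  rw [intervalIntegral.integral_add (iA.const_mul _) (iw.const_mul _),
    intervalIntegral.integral_const_mul, intervalIntegral.integral_const_mul,
    intervalIntegral.integral_const_mul, hW] at hmono
  have hp : 0 < R ^ (1 + a) := by positivity
  have hRn : R ^ (-(1 + a)) = (R ^ (1 + a))⁻¹ := Real.rpow_neg hR.le _
  have h1a : 0 < 1 + a := by linarith
  have h1a' : 0 < 1 - a := by linarith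
  have hmul := mul_le_mul_of_nonneg_right hmono
    (show 0 ≤ (1 + a) * (R ^ (1 + a))⁻¹ by positivity)
  rw [hRn]
  calc u 0 ^ 2 = u 0 ^ 2 * (R ^ (1 + a) / (1 + a)) * ((1 + a) * (R ^ (1 + a))⁻¹) := by
        field_simp
    _ ≤ _ := hmul
    _ = _ := by rw [hE, hA]; field_simp

/-! ### Integrability and passage to the half-space -/

/-- A continuous compactly supported function times `y^a`, `a > -1`, is integrable on the upper
half-space. -/
lemma integrable_mul_rpow {n : ℕ} {a : ℝ} (ha : -1 < a)
    {h : EuclideanSpace ℝ (Fin n) × ℝ → ℝ} (hc : Continuous h) (hs : HasCompactSupport h) :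
    Integrable (fun X => h X * X.2 ^ a)
      ((volume : Measure (EuclideanSpace ℝ (Fin n))).prod (volume.restrict (Set.Ioi (0 : ℝ)))) := by
  obtain ⟨r, hr⟩ := hs.isCompact.isBounded.subset_closedBall 0
  set M := max r 1
  have hM : 0 < M := lt_of_lt_of_le one_pos (le_max_right _ _)
  set B : Set (EuclideanSpace ℝ (Fin n)) := Metric.closedBall 0 M
  have i1 : Integrable (B.indicator fun _ => (1 : ℝ)) volume :=
    (integrable_indicator_iff measurableSet_closedBall).2
      (integrableOn_const (isCompact_closedBall _ _).measure_lt_top.ne)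
  have i2 : Integrable ((Set.Ioc (0:ℝ) M).indicator fun y => y ^ a)
      (volume.restrict (Set.Ioi (0 : ℝ))) := by
    have : Integrable ((Set.Ioc (0:ℝ) M).indicator fun y => y ^ a) volume :=
      (integrable_indicator_iff measurableSet_Ioc).2
        ((intervalIntegrable_iff_integrableOn_Ioc_of_le hM.le).1
          (intervalIntegral.intervalIntegrable_rpow' ha))
    exact this.restrict
  obtain ⟨C, hC⟩ := hs.exists_bound_of_continuous hc
  have i3 := (i1.mul_prod i2).bdd_mul (c := C) hc.aestronglyMeasurable
    (Filter.Eventually.of_forall hC)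
  have hpos : ∀ᵐ X ∂((volume : Measure (EuclideanSpace ℝ (Fin n))).prod
      (volume.restrict (Set.Ioi (0 : ℝ)))), 0 < X.2 :=
    Measure.quasiMeasurePreserving_snd.ae (ae_restrict_mem measurableSet_Ioi)
  refine i3.congr ?_
  filter_upwards [hpos] with X hX
  by_cases hX0 : h X = 0
  · simp [hX0]
  · have hm := hr (subset_tsupport h hX0)
    rw [mem_closedBall_zero_iff, Prod.norm_def, max_le_iff] at hm
    have hB : X.1 ∈ B := mem_closedBall_zero_iff.2 (hm.1.trans (le_max_left _ _))
    have hI : X.2 ∈ Set.Ioc (0:ℝ) M :=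
      ⟨hX, (le_abs_self _).trans (hm.2.trans (le_max_left _ _))⟩
    simp [hB, hI]

/-- If the kernel `K` is at least `k₀ / c` on `(0, R]`, the integral over `(0, R]` without `K` is
controlled by the one over `(0, ∞)` with `K`. -/
lemma weight_compare {a : ℝ} {K f g : ℝ → ℝ} {k₀ c R : ℝ}
    (hk : 0 ≤ k₀) (hK0 : ∀ y, 0 ≤ K y) (hK : ∀ y ∈ Set.Ioc 0 R, k₀ ≤ c * K y)
    (hf : ∀ y, 0 ≤ f y) (hfg : ∀ y, f y ≤ g y)
    (hi : Integrable (fun y => g y * K y * y ^ a) (volume.restrict (Set.Ioi (0 : ℝ))))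
    (hc : 0 ≤ c) :
    k₀ * (∫ y in Set.Ioc 0 R, f y * y ^ a) ≤ c * ∫ y in Set.Ioi 0, g y * K y * y ^ a := by
  rw [← integral_const_mul, ← integral_const_mul]
  have hi' : IntegrableOn (fun y => c * (g y * K y * y ^ a)) (Set.Ioi 0) := hi.const_mul c
  refine le_trans (integral_mono_of_nonneg ?_
    (hi'.mono_set Set.Ioc_subset_Ioi_self) ?_) (setIntegral_mono_set hi' ?_
      Set.Ioc_subset_Ioi_self.eventuallyLE)
  · filter_upwards [ae_restrict_mem measurableSet_Ioc] with y hy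
    exact mul_nonneg hk (mul_nonneg (hf y) (Real.rpow_nonneg hy.1.le _))
  · filter_upwards [ae_restrict_mem measurableSet_Ioc] with y hy
    have hya : 0 ≤ y ^ a := Real.rpow_nonneg hy.1.le _
    calc k₀ * (f y * y ^ a) = (k₀ * f y) * y ^ a := by ring
      _ ≤ ((c * K y) * g y) * y ^ a := by
        have := hK y hy
        have := hfg y
        have := hf y
        have : 0 ≤ c * K y := mul_nonneg hc (hK0 y)
        gcongr
      _ = _ := by ring
  · filter_upwards [ae_restrict_mem measurableSet_Ioi] with y hy
    have hya : 0 ≤ y ^ a := Real.rpow_nonneg (le_of_lt hy) _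
    exact mul_nonneg hc (mul_nonneg (mul_nonneg ((hf y).trans (hfg y)) (hK0 y)) hya)

/-- The algebra combining the one-dimensional trace inequality with the two kernel comparisons. -/
lemma combine_slices {α β T₁ T₂ e k P₁ P₂ A D u : ℝ} (hα : 0 ≤ α) (hβ : 0 ≤ β) (hT₁ : 0 ≤ T₁)
    (hT₂ : 0 ≤ T₂) (he : 0 ≤ e) (hk : 0 ≤ k) (hP₁ : 0 ≤ P₁) (hP₂ : 0 ≤ P₂)
    (h : u ≤ α * T₁ * A + β * T₂ * D) (hA : k * A ≤ e * P₁) (hD : k * D ≤ e * P₂) :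
    u * k ≤ e * (α + β) * (T₁ * P₁ + T₂ * P₂) := by
  calc u * k ≤ (α * T₁ * A + β * T₂ * D) * k := by gcongr
    _ = α * T₁ * (k * A) + β * T₂ * (k * D) := by ring
    _ ≤ α * T₁ * (e * P₁) + β * T₂ * (e * P₂) := by gcongr
    _ ≤ (α + β) * T₁ * (e * P₁) + (α + β) * T₂ * (e * P₂) := by
      gcongr <;> linarith
    _ = _ := by ring

/-- the Gaussian-weighted trace inequality: there is `C = C(n,a) > 0` such
that for every `t > 0`, `X₀ = (x₀,y₀) ∈ ℝⁿ × (0,∞)`, and every smooth compactly supported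
`w`,
`∫_{ℝⁿ} w(x,0)² 𝒢((x,0),X₀,t) dx
  ≤ C ( t^{-(1+a)/2} ∫ w² 𝒢 y^a dX + t^{(1-a)/2} ∫ |∇w|² 𝒢 y^a dX )`. -/
theorem gaussian_trace_inequality (n : ℕ) (hn : 1 ≤ n)
    (a : ℝ) (ha : a ∈ Set.Ioo (-1 : ℝ) 1) :
    ∃ C : ℝ, 0 < C ∧
      ∀ t : ℝ, 0 < t → ∀ (x₀ : EuclideanSpace ℝ (Fin n)) (y₀ : ℝ), 0 < y₀ →
        ∀ w : EuclideanSpace ℝ (Fin n) × ℝ → ℝ, ContDiff ℝ (⊤ : ℕ∞) w → HasCompactSupport w →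
          (∫ x : EuclideanSpace ℝ (Fin n), w (x, 0) ^ 2 * degKernel' a x x₀ 0 y₀ t)
            ≤ C * (t ^ (-(1 + a) / 2) *
                (∫ X : EuclideanSpace ℝ (Fin n) × ℝ in Set.univ ×ˢ Set.Ioi (0 : ℝ),
                  w X ^ 2 * degKernel' a X.1 x₀ X.2 y₀ t * X.2 ^ a)
              + t ^ ((1 - a) / 2) *
                (∫ X : EuclideanSpace ℝ (Fin n) × ℝ in Set.univ ×ˢ Set.Ioi (0 : ℝ),
                  ‖fderiv ℝ w X‖ ^ 2 * degKernel' a X.1 x₀ X.2 y₀ t * X.2 ^ a)) := by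
  obtain ⟨h1, h2⟩ := ha
  have h1a : 0 < 1 + a := by linarith
  have h1a' : 0 < 1 - a := by linarith
  set e := Real.exp (1 / 4) with he
  have he0 : 0 < e := Real.exp_pos _
  refine ⟨e * (2 * (1 + a) + 2 / (1 - a)), by positivity, ?_⟩
  intro t ht x₀ y₀ _ w hw hws
  set μ := (volume : Measure (EuclideanSpace ℝ (Fin n))).prod (volume.restrict (Set.Ioi (0 : ℝ)))
    with hμ
  have hrestr : (volume : Measure (EuclideanSpace ℝ (Fin n) × ℝ)).restrict
      (Set.univ ×ˢ Set.Ioi (0 : ℝ)) = μ := by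
    rw [Measure.volume_eq_prod, ← Measure.prod_restrict, Measure.restrict_univ]
  rw [hrestr]
  have hKc := besselHeatKernel_continuous ⟨h1, h2⟩ y₀ t
  have hGc : Continuous fun x : EuclideanSpace ℝ (Fin n) => gaussKernel' x x₀ t := by
    unfold gaussKernel'; fun_prop
  have hG0 : ∀ x : EuclideanSpace ℝ (Fin n), 0 ≤ gaussKernel' x x₀ t := by
    intro x; unfold gaussKernel'; positivity
  have hkc : Continuous fun X : EuclideanSpace ℝ (Fin n) × ℝ => degKernel' a X.1 x₀ X.2 y₀ t :=
    (hGc.comp continuous_fst).mul (hKc.comp continuous_snd)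
  have hdw : Continuous (fderiv ℝ w) := hw.continuous_fderiv (by simp)
  have I1 : Integrable (fun X : EuclideanSpace ℝ (Fin n) × ℝ =>
      w X ^ 2 * degKernel' a X.1 x₀ X.2 y₀ t * X.2 ^ a) μ := by
    refine integrable_mul_rpow h1 ((hw.continuous.pow 2).mul hkc) ?_
    exact HasCompactSupport.mul_right (hws.comp_left (g := fun s : ℝ => s ^ 2) (by simp))
  have I2 : Integrable (fun X : EuclideanSpace ℝ (Fin n) × ℝ =>
      ‖fderiv ℝ w X‖ ^ 2 * degKernel' a X.1 x₀ X.2 y₀ t * X.2 ^ a) μ := by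
    refine integrable_mul_rpow h1 ((hdw.norm.pow 2).mul hkc) ?_
    exact HasCompactSupport.mul_right
      ((hws.fderiv ℝ).comp_left (g := fun L => ‖L‖ ^ 2) (by simp))
  rw [integral_prod _ I1, integral_prod _ I2, ← integral_const_mul, ← integral_const_mul,
    ← integral_add (I1.integral_prod_left.const_mul _) (I2.integral_prod_left.const_mul _),
    ← integral_const_mul]
  refine integral_mono_of_nonneg (Filter.Eventually.of_forall fun x => ?_)
    (((I1.integral_prod_left.const_mul _).add (I2.integral_prod_left.const_mul _)).const_mul _) ?_
  · exact mul_nonneg (sq_nonneg _) (mul_nonneg (hG0 x) (besselHeatKernel_nonneg ⟨h1, h2⟩ _ _ ht))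
  filter_upwards [I1.prod_right_ae, I2.prod_right_ae] with x J1 J2
  set G := gaussKernel' x x₀ t
  set R := Real.sqrt t with hRdef
  have hR : 0 < R := Real.sqrt_pos.2 ht
  -- the slice `u = w(x, ·)` and its derivative
  have hder : ∀ y, HasDerivAt (fun y => w (x, y)) (fderiv ℝ w (x, y) (0, 1)) y := by
    intro y
    have hd : HasFDerivAt w (fderiv ℝ w (x, y)) (x, y) :=
      (hw.differentiable (by simp) _).hasFDerivAt
    exact hd.comp_hasDerivAt y ((hasDerivAt_const y x).prodMk (hasDerivAt_id y))
  have hvc : Continuous fun y => fderiv ℝ w (x, y) (0, 1) :=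
    (hdw.comp (by fun_prop)).clm_apply continuous_const
  have htr := trace_one_dim ⟨h1, h2⟩ hR hvc hder
  have hpow : ∀ b : ℝ, R ^ b = t ^ (b / 2) := by
    intro b
    rw [hRdef, Real.sqrt_eq_rpow, ← Real.rpow_mul ht.le]
    congr 1; ring
  rw [hpow, hpow] at htr
  set k₀ := G * besselHeatKernel a 0 y₀ t with hk₀
  have hk₀0 : 0 ≤ k₀ := mul_nonneg (hG0 x) (besselHeatKernel_nonneg ⟨h1, h2⟩ _ _ ht)
  have hK0 : ∀ y, 0 ≤ degKernel' a x x₀ y y₀ t := fun y =>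
    mul_nonneg (hG0 x) (besselHeatKernel_nonneg ⟨h1, h2⟩ _ _ ht)
  have hK : ∀ y ∈ Set.Ioc 0 R, k₀ ≤ e * degKernel' a x x₀ y y₀ t := by
    intro y hy
    have hy2 : y ^ 2 ≤ t := by
      rw [← Real.sq_sqrt ht.le]
      exact pow_le_pow_left₀ hy.1.le hy.2 2
    have := mul_le_mul_of_nonneg_left
      (besselHeatKernel_zero_le ⟨h1, h2⟩ y₀ ht hy2) (hG0 x)
    calc k₀ ≤ _ := this
      _ = _ := by unfold degKernel'; ring
  have c1 := weight_compare (f := fun y => w (x, y) ^ 2) hk₀0 hK0 hK (fun y => sq_nonneg _)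
    (fun y => le_rfl) J1 he0.le
  have c2 := weight_compare (f := fun y => (fderiv ℝ w (x, y) (0, 1)) ^ 2)
    (g := fun y => ‖fderiv ℝ w (x, y)‖ ^ 2) hk₀0 hK0 hK (fun y => sq_nonneg _)
    (fun y => by
      have hle := (fderiv ℝ w (x, y)).le_opNorm (0, 1)
      have h01 : ‖((0 : EuclideanSpace ℝ (Fin n)), (1 : ℝ))‖ = 1 := by simp [Prod.norm_def]
      rw [h01, mul_one, Real.norm_eq_abs] at hle
      rw [← sq_abs]
      exact pow_le_pow_left₀ (abs_nonneg _) hle 2) J2 he0.le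
  have p1 : 0 ≤ ∫ y in Set.Ioi (0:ℝ), w (x, y) ^ 2 * degKernel' a x x₀ y y₀ t * y ^ a :=
    setIntegral_nonneg measurableSet_Ioi fun y hy =>
      mul_nonneg (mul_nonneg (sq_nonneg _) (hK0 y)) (Real.rpow_nonneg (le_of_lt hy) _)
  have p2 : 0 ≤ ∫ y in Set.Ioi (0:ℝ),
      ‖fderiv ℝ w (x, y)‖ ^ 2 * degKernel' a x x₀ y y₀ t * y ^ a :=
    setIntegral_nonneg measurableSet_Ioi fun y hy =>
      mul_nonneg (mul_nonneg (sq_nonneg _) (hK0 y)) (Real.rpow_nonneg (le_of_lt hy) _)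
  have q1 : 0 < t ^ (-(1 + a) / 2) := by positivity
  have q2 : 0 < t ^ ((1 - a) / 2) := by positivity
  have h21 : 0 < 2 / (1 - a) := by positivity
  exact combine_slices (by positivity) h21.le q1.le q2.le he0.le hk₀0 p1 p2 htr c1 c2
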